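/- If the weighted oriented clique n-simplicial complex S_n is globally χ-complete, then the Gauss–Bonnet operator D = d + δ, defined on ⊕_{i=0}^n C_c^i(V) in the Hilbert space H = ⊕_{i=0}^n ℓ²(m_i), is essentially self-adjoint; that is, its closure is self-adjoint, equivalently its minimal and maximal extensions coincide. -/

import Mathlib

/-!
Let `φ_k` be finitely supported symmetric functions on simplices with `|φ_k| ≤ 1`, eventually
equal to `1` at each simplex, such that `Σ_y m_{i+1}(x, y) |φ_k(x, y) - φ_k(x)|² ≤ C m_i(x)`
uniformly in `k`. If `u` is in the maximal domain of `D`, then in the decomposition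
`D(φ_k u) - Du = [δ, φ_k]u + [d, φ_k]u + (φ_k - 1)Du` every summand tends to `0` by dominated
convergence. The dominating function for the commutators comes from the energy bound, through
Cauchy–Schwarz on the fibre over `x` for `δ`, and through Fubini for `d`.

Global `χ`-completeness yields such `φ_k`: truncate `χ̃_k` to `[0, 1]`. The energy bound is not
immediate, because `χ̃` is symmetric while the coboundary carries signs. For even `i` one has
`(i + 1) dχ̃(x, y) = χ(y) - Σ_l (-1)^l χ(x_l)`, and summing over the cyclic rotations of `x`
leaves `χ(y) - χ̃(x)`. For odd `i`, `dχ̃ = 1` wherever `χ = 1`, so the hypothesis bounds the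
weighted degree `Σ_y m_{i+1}(x, y) / m_i(x)`, and `|φ_k(x, y) - φ_k(x)| ≤ 1` suffices.
-/

open Filter Function Set
open scoped Topology

namespace DiscreteHodge

/-- A weighted graph `G = (V, m₀, m₁)`: a strictly positive vertex weight `m₀`, a symmetric
nonnegative edge weight `m₁`; `x, y` are neighbors iff `m₁ x y > 0`; `G` is locally finite. -/
structure WG (V : Type*) where
  m₀ : V → ℝ
  m₁ : V → V → ℝ
  m₀_pos : ∀ x, 0 < m₀ x
  m₁_nonneg : ∀ x y, 0 ≤ m₁ x y
  m₁_symm : ∀ x y, m₁ x y = m₁ y x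
  locFin : ∀ x, {y | 0 < m₁ x y}.Finite

variable {V : Type*}

/-- Adjacency in a weighted graph. -/
def WG.Adj (G : WG V) (x y : V) : Prop := 0 < G.m₁ x y

/-- A tuple of vertices is a simplex of the clique complex iff its vertices are pairwise
distinct and pairwise adjacent (span a complete subgraph). -/
def IsSimplex (G : WG V) {k : ℕ} (x : Fin k → V) : Prop :=
  Function.Injective x ∧ ∀ a b : Fin k, a ≠ b → G.Adj (x a) (x b)

/-- The family of simplex weights `(m_i)` of the weighted oriented clique `n`-simplicial
complex over `G`: `m i` is defined on `(i+1)`-tuples, extends `m₀, m₁`, is strictly positive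
exactly on simplices (for `1 ≤ i ≤ n`) and is invariant under permutations of its arguments. -/
structure CliqueWeights (G : WG V) (n : ℕ) where
  m : ∀ i : ℕ, (Fin (i + 1) → V) → ℝ
  nonneg : ∀ i x, 0 ≤ m i x
  m_zero : ∀ x : Fin 1 → V, m 0 x = G.m₀ (x 0)
  m_one : ∀ x : Fin 2 → V, m 1 x = G.m₁ (x 0) (x 1)
  pos_iff : ∀ i, 1 ≤ i → i ≤ n → ∀ x : Fin (i + 1) → V, (0 < m i x ↔ IsSimplex G x)
  perm_inv : ∀ i, 1 ≤ i → i ≤ n → ∀ (x : Fin (i + 1) → V) (σ : Equiv.Perm (Fin (i + 1))),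
      m i (x ∘ σ) = m i x

/-- An alternating function on tuples. -/
def IsAlternating {k : ℕ} (f : (Fin k → V) → ℂ) : Prop :=
  ∀ (x : Fin k → V) (σ : Equiv.Perm (Fin k)),
    f (x ∘ σ) = ((Equiv.Perm.sign σ : ℤ) : ℂ) * f x

/-- An `i`-cochain: an alternating function on `(i+1)`-tuples supported on oriented
`i`-simplices.  Elements of `C_c^i(V)` are cochains with finite support. -/
def IsCochain (G : WG V) (i : ℕ) (f : (Fin (i + 1) → V) → ℂ) : Prop :=
  IsAlternating f ∧ ∀ x, ¬ IsSimplex G x → f x = 0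

/-- Coboundary operator on the part of the complex lying over `Λ ⊆ V`:
`d_i f(x₁,…,x_{i+1}) = Σ_j (−1)^{j+1} f(x₁,…,x̂_j,…,x_{i+1})` on simplices with all
vertices in `Λ`, and `0` elsewhere. -/
noncomputable def dOn (G : WG V) (Λ : Set V) (i : ℕ) (f : (Fin (i + 1) → V) → ℂ) :
    (Fin (i + 2) → V) → ℂ :=
  Set.indicator {x | IsSimplex G x ∧ ∀ j, x j ∈ Λ}
    (fun x => ∑ j : Fin (i + 2), (-1 : ℂ) ^ (j : ℕ) * f (x ∘ j.succAbove))

/-- The coboundary operator `d_{i+1} : C_c^i(V) → C_c^{i+1}(V)` (paper index `i+1`). -/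
noncomputable def d (G : WG V) (i : ℕ) (f : (Fin (i + 1) → V) → ℂ) :
    (Fin (i + 2) → V) → ℂ :=
  dOn G Set.univ i f

/-- Codifferential on the part of the complex lying over `Λ ⊆ V`:
`δ g(x₁,…,x_{i+1}) = (1/m_i(x)) Σ_{y ∈ F(x) ∩ Λ} m_{i+1}(x,y) g(x,y)`; vertices outside the
common-neighbor set `F(x)` contribute `0` since `m_{i+1}` vanishes on non-simplices. -/
noncomputable def deltaOn (G : WG V) {n : ℕ} (W : CliqueWeights G n) (Λ : Set V) (i : ℕ)
    (g : (Fin (i + 2) → V) → ℂ) : (Fin (i + 1) → V) → ℂ :=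
  fun x => ((W.m i x : ℝ) : ℂ)⁻¹ *
    ∑' y : V, Set.indicator Λ
      (fun y => ((W.m (i + 1) (Fin.snoc x y) : ℝ) : ℂ) * g (Fin.snoc x y)) y

/-- The codifferential `δ_{i+1} : C_c^{i+1}(V) → C_c^i(V)` (paper index `i+1`). -/
noncomputable def delta (G : WG V) {n : ℕ} (W : CliqueWeights G n) (i : ℕ)
    (g : (Fin (i + 2) → V) → ℂ) : (Fin (i + 1) → V) → ℂ :=
  deltaOn G W Set.univ i g

/-- Squared `ℓ²(m_i)` norm: `‖f‖² = (1/(i+1)!) Σ_σ m_i(σ) |f(σ)|²`. -/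
noncomputable def norm2 {G : WG V} {n : ℕ} (W : CliqueWeights G n) (i : ℕ)
    (f : (Fin (i + 1) → V) → ℂ) : ℝ :=
  ((Nat.factorial (i + 1) : ℝ))⁻¹ * ∑' x : Fin (i + 1) → V, W.m i x * ‖f x‖ ^ 2

/-- Membership in `ℓ²(m_i)`. -/
def MemL2 {G : WG V} {n : ℕ} (W : CliqueWeights G n) (i : ℕ)
    (f : (Fin (i + 1) → V) → ℂ) : Prop :=
  Summable (fun x : Fin (i + 1) → V => W.m i x * ‖f x‖ ^ 2)

/-- The `ℓ²(m_i)` inner product `⟨f,g⟩ = (1/(i+1)!) Σ_σ m_i(σ) f(σ) conj (g σ)`. -/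
noncomputable def inner2 {G : WG V} {n : ℕ} (W : CliqueWeights G n) (i : ℕ)
    (f g : (Fin (i + 1) → V) → ℂ) : ℂ :=
  ((Nat.factorial (i + 1) : ℂ))⁻¹ *
    ∑' x : Fin (i + 1) → V, ((W.m i x : ℝ) : ℂ) * f x * (starRingEnd ℂ) (g x)

/-- Convergence `u k → f` in `ℓ²(m_i)`. -/
def TendstoL2 {G : WG V} {n : ℕ} (W : CliqueWeights G n) (i : ℕ)
    (u : ℕ → (Fin (i + 1) → V) → ℂ) (f : (Fin (i + 1) → V) → ℂ) : Prop :=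
  Tendsto (fun k => norm2 W i (fun x => u k x - f x)) atTop (𝓝 0)

/-- The Gauss–Bonnet operator `D = d + δ` acting componentwise on cochain families:
`(DF)_i = d_i f_{i-1} + δ_{i+1} f_{i+1}` with the end terms absent. -/
noncomputable def Dop (G : WG V) {n : ℕ} (W : CliqueWeights G n)
    (f : ∀ i : ℕ, (Fin (i + 1) → V) → ℂ) : ∀ i : ℕ, (Fin (i + 1) → V) → ℂ
  | 0 => delta G W 0 (f 1)
  | (i + 1) =>
      if i + 1 ≤ n then (fun x => d G i (f i) x + delta G W (i + 1) (f (i + 2)) x) else 0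

/-- The Laplacian block `L_i = δ_{i+1} d_{i+1} + d_i δ_i` on `C_c^i(V)`
(the `d_iδ_i` term absent for `i = 0`, the `δ_{i+1}d_{i+1}` term absent for `i = n`). -/
noncomputable def Lblock (G : WG V) {n : ℕ} (W : CliqueWeights G n) :
    ∀ i : ℕ, ((Fin (i + 1) → V) → ℂ) → (Fin (i + 1) → V) → ℂ
  | 0 => fun g => if 1 ≤ n then delta G W 0 (d G 0 g) else 0
  | (i + 1) => fun g x =>
      (if i + 2 ≤ n then delta G W (i + 1) (d G (i + 1) g) x else 0)
        + d G i (delta G W i g) x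

/-- A family `(f_0, …, f_n)` of cochains, one in each degree (encoded with `f i = 0`
for `i > n`). -/
def CochainFamily (G : WG V) (n : ℕ) (u : ∀ i : ℕ, (Fin (i + 1) → V) → ℂ) : Prop :=
  (∀ i, IsCochain G i (u i)) ∧ ∀ i, n < i → u i = 0

/-- All components finitely supported, i.e. membership in `⊕_{i=0}^n C_c^i(V)`. -/
def FinSuppFamily (u : ∀ i : ℕ, (Fin (i + 1) → V) → ℂ) : Prop :=
  ∀ i, (Function.support (u i)).Finite

/-- Membership in `H = ⊕_{i=0}^n ℓ²(m_i)`. -/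
def MemL2Family {G : WG V} {n : ℕ} (W : CliqueWeights G n)
    (u : ∀ i : ℕ, (Fin (i + 1) → V) → ℂ) : Prop :=
  ∀ i, MemL2 W i (u i)

/-- Componentwise `ℓ²` convergence of cochain families, i.e. convergence in `H`. -/
def TendstoL2Family {G : WG V} {n : ℕ} (W : CliqueWeights G n)
    (u : ℕ → ∀ i : ℕ, (Fin (i + 1) → V) → ℂ)
    (f : ∀ i : ℕ, (Fin (i + 1) → V) → ℂ) : Prop :=
  ∀ i, TendstoL2 W i (fun k => u k i) (f i)

/-- Extension of a vertex function to tuples by averaging: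
`χ̃(x_0,…,x_{k-1}) = (1/k) Σ_j χ(x_j)`. -/
noncomputable def avg (χ : V → ℝ) {k : ℕ} (x : Fin k → V) : ℂ :=
  (k : ℂ)⁻¹ * ∑ j : Fin k, (χ (x j) : ℂ)

/-- The discrete gradient energy of a vertex function `χ` at a `j`-simplex `x` (relative to
the region `Λ`): `(1/m_j(x)) Σ_{y ∈ F(x) ∩ Λ} m_{j+1}(x,y) |d_{j+1} χ̃ (x,y)|²`. -/
noncomputable def gradEnergyOn {G : WG V} {n : ℕ} (W : CliqueWeights G n) (Λ : Set V)
    (j : ℕ) (χ : V → ℝ) (x : Fin (j + 1) → V) : ℝ :=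
  (W.m j x)⁻¹ * ∑' y : V, Set.indicator Λ
    (fun y => W.m (j + 1) (Fin.snoc x y) *
      ‖dOn G Λ j (fun σ : Fin (j + 1) → V => avg χ σ) (Fin.snoc x y)‖ ^ 2) y

/-- `(O, χ)` is a system of plateau cut-offs witnessing global `χ`-completeness of the part
of the complex lying over `Λ`: `(O k)` is an increasing exhaustion of `Λ` by finite sets,
the `χ k` are finitely supported vertex functions whose averages equal `1` on every simplex
with all vertices in `O k`, with a uniform discrete-gradient energy bound in all degrees. -/
def IsChiWitnessOn {G : WG V} {n : ℕ} (W : CliqueWeights G n) (Λ : Set V)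
    (O : ℕ → Set V) (χ : ℕ → V → ℝ) : Prop :=
  (∀ k, (O k).Finite) ∧ Monotone O ∧ (∀ k, O k ⊆ Λ) ∧ (⋃ k, O k) = Λ ∧
  (∀ k, (Function.support (χ k)).Finite) ∧
  (∀ k (i : ℕ), i ≤ n → ∀ x : Fin (i + 1) → V, IsSimplex G x → (∀ j, x j ∈ Λ) →
      (∀ j, x j ∈ O k) → avg (χ k) x = 1) ∧
  ∃ C > 0, ∀ k (j : ℕ), j + 1 ≤ n → ∀ x : Fin (j + 1) → V,
      IsSimplex G x → (∀ a, x a ∈ Λ) → gradEnergyOn W Λ j (χ k) x ≤ C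

/-- Global `χ`-completeness of the restriction of the complex to `Λ`. -/
def GloballyChiCompleteOn {G : WG V} {n : ℕ} (W : CliqueWeights G n) (Λ : Set V) : Prop :=
  ∃ O χ, IsChiWitnessOn W Λ O χ

/-- Global `χ`-completeness of the weighted clique `n`-simplicial complex. -/
def GloballyChiComplete {G : WG V} {n : ℕ} (W : CliqueWeights G n) : Prop :=
  GloballyChiCompleteOn W Set.univ

/-- `(O, χ)` witnesses local `χ`-completeness at level `ℓ`: cut-offs are required only on
`ℓ`-simplices, and the energy bound only in degree `ℓ`. -/
def IsChiWitnessAtLevel {G : WG V} {n : ℕ} (W : CliqueWeights G n) (ℓ : ℕ)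
    (O : ℕ → Set V) (χ : ℕ → V → ℝ) : Prop :=
  (∀ k, (O k).Finite) ∧ Monotone O ∧ (⋃ k, O k) = Set.univ ∧
  (∀ k, (Function.support (χ k)).Finite) ∧
  (∀ k (x : Fin (ℓ + 1) → V), IsSimplex G x → (∀ j, x j ∈ O k) → avg (χ k) x = 1) ∧
  ∃ C > 0, ∀ k (j : ℕ), j + 1 = ℓ → ∀ x : Fin (j + 1) → V,
      IsSimplex G x → gradEnergyOn W Set.univ j (χ k) x ≤ C

/-- Local `χ`-completeness at level `ℓ`. -/
def LocallyChiCompleteAtLevel {G : WG V} {n : ℕ} (W : CliqueWeights G n) (ℓ : ℕ) : Prop :=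
  ∃ O χ, IsChiWitnessAtLevel W ℓ O χ

/-- Essential self-adjointness of the Gauss–Bonnet operator `D = d + δ`, phrased as
`D_min = D_max`: every `u` in the maximal domain (i.e. `u ∈ H` with the pointwise-defined
`Du ∈ H`) is approximated, in the graph norm of `D`, by finitely supported cochain
families (elements of `⊕_{i=0}^n C_c^i(V)`). -/
def ESA_D {G : WG V} {n : ℕ} (W : CliqueWeights G n) : Prop :=
  ∀ u : ∀ i : ℕ, (Fin (i + 1) → V) → ℂ,
    CochainFamily G n u → MemL2Family W u → MemL2Family W (Dop G W u) →
    ∃ uk : ℕ → ∀ i : ℕ, (Fin (i + 1) → V) → ℂ,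
      (∀ k, CochainFamily G n (uk k) ∧ FinSuppFamily (uk k)) ∧
      TendstoL2Family W uk u ∧
      TendstoL2Family W (fun k => Dop G W (uk k)) (Dop G W u)

/-- Essential self-adjointness of the Hodge Laplacian `L = D²`, phrased as `L_min = L_max`
via graph-norm approximation from `⊕_{i=0}^n C_c^i(V)`. -/
def ESA_L {G : WG V} {n : ℕ} (W : CliqueWeights G n) : Prop :=
  ∀ u : ∀ i : ℕ, (Fin (i + 1) → V) → ℂ,
    CochainFamily G n u → MemL2Family W u → MemL2Family W (Dop G W (Dop G W u)) →
    ∃ uk : ℕ → ∀ i : ℕ, (Fin (i + 1) → V) → ℂ,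
      (∀ k, CochainFamily G n (uk k) ∧ FinSuppFamily (uk k)) ∧
      TendstoL2Family W uk u ∧
      TendstoL2Family W (fun k => Dop G W (Dop G W (uk k))) (Dop G W (Dop G W u))

/-! ### Null sequences in weighted `ℓ²` spaces -/

section WeightedL2

variable {ι κ E : Type*} [SeminormedAddCommGroup E]

lemma tendsto_tsum_zero_of_dominated {α : Type*} {l : Filter α} {a : α → ι → ℝ} {b : ι → ℝ}
    (hb : Summable b) (ha : ∀ k x, 0 ≤ a k x) (hab : ∀ k x, a k x ≤ b x)
    (hz : ∀ x, ∀ᶠ k in l, a k x = 0) : Tendsto (fun k => ∑' x, a k x) l (𝓝 0) := by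
  have hnorm : ∀ k x, ‖a k x‖ ≤ b x := fun k x => by
    rw [Real.norm_of_nonneg (ha k x)]
    exact hab k x
  simpa using tendsto_tsum_of_dominated_convergence hb
    (fun x => EventuallyEq.tendsto (hz x)) (Eventually.of_forall hnorm)

/-- The sequence `w` lies in the weighted space `ℓ²(m)` and tends to `0` there. Summability is
part of the definition because `∑'` is `0` for divergent series. -/
def IsL2Null (m : ι → ℝ) (w : ℕ → ι → E) : Prop :=
  (∀ k, Summable fun x => m x * ‖w k x‖ ^ 2) ∧
    Tendsto (fun k => ∑' x, m x * ‖w k x‖ ^ 2) atTop (𝓝 0)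

variable {m : ι → ℝ} {v w : ℕ → ι → E}

lemma IsL2Null.congr (hw : IsL2Null m w) (h : ∀ k x, m x ≠ 0 → v k x = w k x) :
    IsL2Null m v := by
  have heq : ∀ k, (fun x => m x * ‖v k x‖ ^ 2) = fun x => m x * ‖w k x‖ ^ 2 := fun k => by
    funext x
    rcases eq_or_ne (m x) 0 with hx | hx
    · simp [hx]
    · rw [h k x hx]
  simpa only [IsL2Null, heq] using hw

lemma isL2Null_zero (m : ι → ℝ) : IsL2Null m (0 : ℕ → ι → E) := by
  simp [IsL2Null, summable_zero]

lemma isL2Null_of_dominated (hm : ∀ x, 0 ≤ m x) {b : ι → ℝ} (hb : Summable b)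
    (hwb : ∀ k x, m x * ‖w k x‖ ^ 2 ≤ b x) (hz : ∀ x, ∀ᶠ k in atTop, w k x = 0) :
    IsL2Null m w := by
  have h0 : ∀ k x, 0 ≤ m x * ‖w k x‖ ^ 2 := fun k x => mul_nonneg (hm x) (sq_nonneg _)
  exact ⟨fun k => .of_nonneg_of_le (h0 k) (hwb k) hb,
    tendsto_tsum_zero_of_dominated hb h0 hwb fun x => (hz x).mono fun k hk => by simp [hk]⟩

lemma norm_add_sq_le_two_mul (a b : E) : ‖a + b‖ ^ 2 ≤ 2 * (‖a‖ ^ 2 + ‖b‖ ^ 2) :=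
  (pow_le_pow_left₀ (norm_nonneg _) (norm_add_le a b) 2).trans add_sq_le

lemma IsL2Null.add (hm : ∀ x, 0 ≤ m x) (hv : IsL2Null m v) (hw : IsL2Null m w) :
    IsL2Null m (v + w) := by
  have h0 : ∀ k x, 0 ≤ m x * ‖(v + w) k x‖ ^ 2 := fun k x => mul_nonneg (hm x) (sq_nonneg _)
  have hle : ∀ k x, m x * ‖(v + w) k x‖ ^ 2 ≤
      2 * (m x * ‖v k x‖ ^ 2 + m x * ‖w k x‖ ^ 2) := fun k x => by
    rw [← mul_add, mul_left_comm]
    exact mul_le_mul_of_nonneg_left (norm_add_sq_le_two_mul _ _) (hm x)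
  have hs := fun k => ((hv.1 k).add (hw.1 k)).mul_left 2
  have hvw := fun k => Summable.of_nonneg_of_le (h0 k) (hle k) (hs k)
  refine ⟨hvw, squeeze_zero (fun k => tsum_nonneg (h0 k))
    (fun k => (hvw k).tsum_le_tsum (hle k) (hs k)) ?_⟩
  simpa only [tsum_mul_left, (hv.1 _).tsum_add (hw.1 _), add_zero, mul_zero]
    using (hv.2.add hw.2).const_mul 2

lemma IsL2Null.sum (hm : ∀ x, 0 ≤ m x) {w : κ → ℕ → ι → E} (s : Finset κ)
    (hw : ∀ j, IsL2Null m (w j)) : IsL2Null m (∑ j ∈ s, w j) :=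
  Finset.sum_induction _ _ (fun _ _ => IsL2Null.add hm) (isL2Null_zero m) fun j _ => hw j

lemma isL2Null_comp_equiv_iff (e : κ ≃ ι) :
    IsL2Null (m ∘ e) (fun k => w k ∘ e) ↔ IsL2Null m w :=
  and_congr (forall_congr' fun k => e.summable_iff (f := fun x => m x * ‖w k x‖ ^ 2))
    (iff_of_eq (congrArg (Tendsto · _ _)
      (funext fun k => e.tsum_eq fun x => m x * ‖w k x‖ ^ 2)))

lemma isL2Null_of_fibre_dominated {m : ι × κ → ℝ} (hm : ∀ p, 0 ≤ m p) {w : ℕ → ι × κ → E}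
    {s : ι → Finset κ} (hs : ∀ x, ∀ y ∉ s x, m (x, y) = 0) {b : ι → ℝ} (hb : Summable b)
    (hwb : ∀ k x, ∑ y ∈ s x, m (x, y) * ‖w k (x, y)‖ ^ 2 ≤ b x)
    (hz : ∀ x, ∀ᶠ k in atTop, ∀ y ∈ s x, w k (x, y) = 0) : IsL2Null m w := by
  have h0 : ∀ k p, 0 ≤ m p * ‖w k p‖ ^ 2 := fun k p => mul_nonneg (hm p) (sq_nonneg _)
  have hfib : ∀ k x, ∀ y ∉ s x, m (x, y) * ‖w k (x, y)‖ ^ 2 = 0 := fun k x y hy => by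
    rw [hs x y hy, zero_mul]
  have htsum : ∀ k x, ∑' y, m (x, y) * ‖w k (x, y)‖ ^ 2 =
      ∑ y ∈ s x, m (x, y) * ‖w k (x, y)‖ ^ 2 := fun k x => tsum_eq_sum (hfib k x)
  have h0' : ∀ k x, 0 ≤ ∑ y ∈ s x, m (x, y) * ‖w k (x, y)‖ ^ 2 := fun k x =>
    Finset.sum_nonneg fun y _ => h0 k (x, y)
  have hsum : ∀ k, Summable fun p => m p * ‖w k p‖ ^ 2 := fun k => by
    refine (summable_prod_of_nonneg (h0 k)).2
      ⟨fun x => summable_of_ne_finset_zero (hfib k x), ?_⟩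
    simpa only [htsum] using Summable.of_nonneg_of_le (h0' k) (hwb k) hb
  refine ⟨hsum, ?_⟩
  simp only [fun k => (hsum k).tsum_prod, htsum]
  exact tendsto_tsum_zero_of_dominated hb h0' hwb fun x => (hz x).mono fun k hk =>
    Finset.sum_eq_zero fun y hy => by simp [hk y hy]

end WeightedL2

lemma norm_sum_smul_sq_le {κ E : Type*} [SeminormedAddCommGroup E] [NormedSpace ℝ E]
    (s : Finset κ) {p : κ → ℝ} (hp : ∀ y, 0 ≤ p y) {w : κ → E} {a b : κ → ℝ}
    (hw : ∀ y ∈ s, ‖w y‖ ≤ a y * b y) :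
    ‖∑ y ∈ s, p y • w y‖ ^ 2 ≤ (∑ y ∈ s, p y * a y ^ 2) * ∑ y ∈ s, p y * b y ^ 2 := by
  have htri : ‖∑ y ∈ s, p y • w y‖ ≤ ∑ y ∈ s, p y * (a y * b y) :=
    norm_sum_le_of_le s fun y hy => by
      rw [norm_smul, Real.norm_of_nonneg (hp y)]
      exact mul_le_mul_of_nonneg_left (hw y hy) (hp y)
  refine (pow_le_pow_left₀ (norm_nonneg _) htri 2).trans ?_
  exact Finset.sum_sq_le_sum_mul_sum_of_sq_le_mul s
    (fun y _ => mul_nonneg (hp y) (sq_nonneg _)) (fun y _ => mul_nonneg (hp y) (sq_nonneg _))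
    fun y _ => le_of_eq (by ring)

lemma norm_sum_sq_le_card_mul {κ E : Type*} [SeminormedAddCommGroup E] (s : Finset κ)
    (w : κ → E) : ‖∑ j ∈ s, w j‖ ^ 2 ≤ s.card * ∑ j ∈ s, ‖w j‖ ^ 2 :=
  (pow_le_pow_left₀ (norm_nonneg _) (norm_sum_le s w) 2).trans sq_sum_le_card_mul_sum_sq

/-! ### Tuples and rotations -/

lemma exists_perm_insertNth_eq_snoc_comp {α : Type*} {k : ℕ} (j : Fin (k + 1)) (y : α)
    (x : Fin k → α) : ∃ σ : Equiv.Perm (Fin (k + 1)),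
      (j.insertNth y x : Fin (k + 1) → α) = (Fin.snoc x y : Fin (k + 1) → α) ∘ σ := by
  refine ⟨j.cycleRange.trans (finRotate (k + 1)).symm, ?_⟩
  rw [← Fin.cons_comp_cycleRange, Fin.snoc_eq_cons_rotate]
  funext a
  simp

lemma exists_perm_snoc_comp_eq {α : Type*} {k : ℕ} (x : Fin k → α) (σ : Equiv.Perm (Fin k))
    (y : α) : ∃ τ : Equiv.Perm (Fin (k + 1)),
      (Fin.snoc (x ∘ σ) y : Fin (k + 1) → α) = (Fin.snoc x y : Fin (k + 1) → α) ∘ τ := by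
  refine ⟨finSuccEquivLast.trans (σ.optionCongr.trans finSuccEquivLast.symm), ?_⟩
  funext a
  induction a using Fin.lastCases <;> simp

lemma sum_sum_neg_one_pow_mul_rotate {R : Type*} [CommRing R] {i : ℕ} (hi : Even i)
    (f : Fin (i + 1) → R) :
    ∑ s : Fin (i + 1), ∑ l : Fin (i + 1), (-1 : R) ^ (l : ℕ) * f (l + s) = ∑ l, f l := by
  have hrot : ∀ l : Fin (i + 1), ∑ s, f (l + s) = ∑ a, f a := fun l =>
    Equiv.sum_comp (Equiv.addLeft l) f
  rw [Finset.sum_comm]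
  simp_rw [← Finset.mul_sum, hrot, ← Finset.sum_mul]
  rw [Fin.sum_neg_one_pow, if_neg (by simpa [Nat.even_add] using hi), one_mul]

/-! ### Simplices, links and weights -/

section Simplices

variable {G : WG V} {n : ℕ}

lemma IsSimplex.comp_perm {k : ℕ} {x : Fin k → V} (h : IsSimplex G x)
    (σ : Equiv.Perm (Fin k)) : IsSimplex G (x ∘ σ) :=
  ⟨h.1.comp σ.injective, fun _ _ hab => h.2 _ _ (σ.injective.ne hab)⟩

lemma isSimplex_comp_perm {k : ℕ} {x : Fin k → V} (σ : Equiv.Perm (Fin k)) :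
    IsSimplex G (x ∘ σ) ↔ IsSimplex G x :=
  ⟨fun h => by simpa [Function.comp_assoc] using h.comp_perm σ.symm, fun h => h.comp_perm σ⟩

lemma IsSimplex.of_snoc {k : ℕ} {x : Fin k → V} {y : V}
    (h : IsSimplex G (Fin.snoc x y : Fin (k + 1) → V)) : IsSimplex G x := by
  refine ⟨fun a b hab => ?_, fun a b hab => ?_⟩
  · simpa using @h.1 a.castSucc b.castSucc (by simpa using hab)
  · simpa using h.2 a.castSucc b.castSucc (by simpa using hab)

lemma isSimplex_fin_one (x : Fin 1 → V) : IsSimplex G x :=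
  ⟨Function.injective_of_subsingleton x, fun a b hab => (hab (Subsingleton.elim a b)).elim⟩

lemma finite_setOf_isSimplex_snoc (G : WG V) {k : ℕ} (x : Fin (k + 1) → V) :
    {y | IsSimplex G (Fin.snoc x y : Fin (k + 2) → V)}.Finite := by
  refine (G.locFin (x 0)).subset fun y hy => ?_
  simpa [WG.Adj] using hy.2 (Fin.castSucc 0) (Fin.last _) (Fin.castSucc_lt_last _).ne

/-- The set `F(x)` of common neighbours of the entries of `x`, as a finset. It is empty unless
`x` is a simplex. -/
noncomputable def link (G : WG V) {k : ℕ} (x : Fin (k + 1) → V) : Finset V :=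
  (finite_setOf_isSimplex_snoc G x).toFinset

@[simp]
lemma mem_link {k : ℕ} {x : Fin (k + 1) → V} {y : V} :
    y ∈ link G x ↔ IsSimplex G (Fin.snoc x y : Fin (k + 2) → V) := by
  simp [link]

lemma link_eq_empty {k : ℕ} {x : Fin (k + 1) → V} (hx : ¬ IsSimplex G x) : link G x = ∅ :=
  Finset.eq_empty_of_forall_notMem fun _ hy => hx (mem_link.1 hy).of_snoc

lemma link_comp_perm {k : ℕ} (x : Fin (k + 1) → V) (σ : Equiv.Perm (Fin (k + 1))) :
    link G (x ∘ σ) = link G x := by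
  ext y
  obtain ⟨τ, hτ⟩ := exists_perm_snoc_comp_eq x σ y
  rw [mem_link, mem_link, hτ, isSimplex_comp_perm]

variable (W : CliqueWeights G n) {i : ℕ}

lemma CliqueWeights.m_pos_iff (hi : i ≤ n) {x : Fin (i + 1) → V} :
    0 < W.m i x ↔ IsSimplex G x := by
  rcases Nat.eq_zero_or_pos i with rfl | h
  · rw [W.m_zero]
    exact iff_of_true (G.m₀_pos _) (isSimplex_fin_one x)
  · exact W.pos_iff i h hi x

lemma CliqueWeights.m_eq_zero (hi : i ≤ n) {x : Fin (i + 1) → V} (hx : ¬ IsSimplex G x) :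
    W.m i x = 0 :=
  le_antisymm (not_lt.1 fun h => hx ((W.m_pos_iff hi).1 h)) (W.nonneg i x)

lemma CliqueWeights.m_snoc_eq_zero (hi : i + 1 ≤ n) {x : Fin (i + 1) → V} {y : V}
    (hy : y ∉ link G x) : W.m (i + 1) (Fin.snoc x y) = 0 :=
  W.m_eq_zero hi (by simpa using hy)

lemma CliqueWeights.m_comp_perm (hi : i ≤ n) (x : Fin (i + 1) → V)
    (σ : Equiv.Perm (Fin (i + 1))) : W.m i (x ∘ σ) = W.m i x := by
  rcases Nat.eq_zero_or_pos i with rfl | h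
  · have hσ : x ∘ σ = x := funext fun a => congrArg x (Subsingleton.elim (α := Fin 1) _ _)
    rw [hσ]
  · exact W.perm_inv i h hi x σ

lemma CliqueWeights.m_snoc_comp_perm (hi : i + 1 ≤ n) (x : Fin (i + 1) → V)
    (σ : Equiv.Perm (Fin (i + 1))) (y : V) :
    W.m (i + 1) (Fin.snoc (x ∘ σ) y) = W.m (i + 1) (Fin.snoc x y) := by
  obtain ⟨τ, hτ⟩ := exists_perm_snoc_comp_eq x σ y
  rw [hτ, W.m_comp_perm hi]

lemma CliqueWeights.tsum_m_snoc_mul {R : Type*} [Semiring R] [TopologicalSpace R] [Algebra ℝ R]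
    (hi : i + 1 ≤ n) (x : Fin (i + 1) → V) (g : V → R) :
    ∑' y, algebraMap ℝ R (W.m (i + 1) (Fin.snoc x y)) * g y =
      ∑ y ∈ link G x, algebraMap ℝ R (W.m (i + 1) (Fin.snoc x y)) * g y :=
  tsum_eq_sum fun y hy => by rw [W.m_snoc_eq_zero hi hy, map_zero, zero_mul]

/-! ### The coboundary and the codifferential -/

lemma d_apply {f : (Fin (i + 1) → V) → ℂ} {z : Fin (i + 2) → V} (hz : IsSimplex G z) :
    d G i f z = ∑ j : Fin (i + 2), (-1 : ℂ) ^ (j : ℕ) * f (z ∘ j.succAbove) := by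
  rw [d, dOn, Set.indicator_of_mem]
  exact ⟨hz, fun _ => Set.mem_univ _⟩

lemma d_mul_sub_mul_d {φ : ∀ i : ℕ, (Fin (i + 1) → V) → ℂ} {f : (Fin (i + 1) → V) → ℂ}
    {z : Fin (i + 2) → V} (hz : IsSimplex G z) :
    d G i (φ i * f) z - φ (i + 1) z * d G i f z = ∑ j : Fin (i + 2),
      (-1 : ℂ) ^ (j : ℕ) * (φ i (z ∘ j.succAbove) - φ (i + 1) z) * f (z ∘ j.succAbove) := by
  rw [d_apply hz, d_apply hz, Finset.mul_sum, ← Finset.sum_sub_distrib]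
  exact Finset.sum_congr rfl fun j _ => by
    rw [Pi.mul_apply]
    ring

variable {W}

lemma delta_apply (hi : i + 1 ≤ n) (g : (Fin (i + 2) → V) → ℂ) (x : Fin (i + 1) → V) :
    delta G W i g x = (W.m i x)⁻¹ •
      ∑ y ∈ link G x, W.m (i + 1) (Fin.snoc x y) • g (Fin.snoc x y) := by
  rw [delta, deltaOn, Set.indicator_univ]
  simpa using Or.inl (W.tsum_m_snoc_mul hi x fun y => g (Fin.snoc x y))

lemma delta_mul_sub_mul_delta (hi : i + 1 ≤ n) {φ : ∀ i : ℕ, (Fin (i + 1) → V) → ℂ}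
    {g : (Fin (i + 2) → V) → ℂ} {x : Fin (i + 1) → V} :
    delta G W i (φ (i + 1) * g) x - φ i x * delta G W i g x = (W.m i x)⁻¹ •
      ∑ y ∈ link G x, W.m (i + 1) (Fin.snoc x y) •
        ((φ (i + 1) (Fin.snoc x y) - φ i x) * g (Fin.snoc x y)) := by
  rw [delta_apply hi, delta_apply hi, mul_smul_comm, ← smul_sub, Finset.mul_sum,
    ← Finset.sum_sub_distrib]
  congr 1
  refine Finset.sum_congr rfl fun y _ => ?_
  rw [mul_smul_comm, ← smul_sub, Pi.mul_apply, sub_mul]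

lemma MemL2.summable_sum_link (hi : i + 1 ≤ n) {g : (Fin (i + 2) → V) → ℂ}
    (hg : MemL2 W (i + 1) g) :
    Summable fun x : Fin (i + 1) → V =>
      ∑ y ∈ link G x, W.m (i + 1) (Fin.snoc x y) * ‖g (Fin.snoc x y)‖ ^ 2 := by
  have hsnoc := (Fin.snocEquiv fun _ => V).summable_iff.2 hg
  have hpairs := (Equiv.prodComm _ _).summable_iff.2 hsnoc
  have hfibres := ((summable_prod_of_nonneg fun p =>
    mul_nonneg (W.nonneg _ _) (sq_nonneg _)).1 hpairs).2
  exact hfibres.congr fun x => W.tsum_m_snoc_mul hi x fun y => ‖g (Fin.snoc x y)‖ ^ 2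

lemma IsL2Null.tendstoL2 {u : ℕ → (Fin (i + 1) → V) → ℂ} {f : (Fin (i + 1) → V) → ℂ}
    (h : IsL2Null (W.m i) fun k => u k - f) : TendstoL2 W i u f := by
  simpa [TendstoL2, norm2] using h.2.const_mul ((Nat.factorial (i + 1) : ℝ))⁻¹

end Simplices

/-! ### Cut-off sequences -/

section Cutoff

variable {G : WG V} {n : ℕ} {W : CliqueWeights G n}

/-- The energy `Σ_{y ∈ F(x)} m_{i+1}(x, y) |φ(x, y) - φ(x)|²` of a family `φ` of functions on
simplices: unlike `gradEnergyOn`, it compares `φ` at `(x, y)` with the single face `x`, and it is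
not divided by `m_i(x)`. -/
noncomputable def extensionEnergy (W : CliqueWeights G n) (φ : ∀ i : ℕ, (Fin (i + 1) → V) → ℂ)
    {i : ℕ} (x : Fin (i + 1) → V) : ℝ :=
  ∑ y ∈ link G x, W.m (i + 1) (Fin.snoc x y) * ‖φ (i + 1) (Fin.snoc x y) - φ i x‖ ^ 2

/-- A sequence of symmetric, finitely supported, uniformly bounded functions on simplices which
converges pointwise to `1` and has uniformly bounded energy density. Multiplication by such
functions approximates elements of the maximal domain of `D` by finitely supported ones. -/
structure IsCutoffSequence (W : CliqueWeights G n)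
    (φ : ℕ → ∀ i : ℕ, (Fin (i + 1) → V) → ℂ) : Prop where
  comp_perm : ∀ k i (x : Fin (i + 1) → V) (σ : Equiv.Perm (Fin (i + 1))),
    φ k i (x ∘ σ) = φ k i x
  norm_le_one : ∀ k i x, ‖φ k i x‖ ≤ 1
  finite_support : ∀ k i, {x | IsSimplex G x ∧ φ k i x ≠ 0}.Finite
  eventually_eq_one : ∀ i x, ∀ᶠ k in atTop, φ k i x = 1
  exists_extensionEnergy_le : ∃ C, 0 ≤ C ∧ ∀ k i, i + 1 ≤ n → ∀ x : Fin (i + 1) → V,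
    extensionEnergy W (φ k) x ≤ C * W.m i x

lemma m_mul_norm_delta_comm_sq_le {i : ℕ} (hi : i + 1 ≤ n)
    {φ : ∀ i : ℕ, (Fin (i + 1) → V) → ℂ} {C : ℝ} (hC : 0 ≤ C) {x : Fin (i + 1) → V}
    (hφ : extensionEnergy W φ x ≤ C * W.m i x) (g : (Fin (i + 2) → V) → ℂ) :
    W.m i x * ‖delta G W i (φ (i + 1) * g) x - φ i x * delta G W i g x‖ ^ 2 ≤
      C * ∑ y ∈ link G x, W.m (i + 1) (Fin.snoc x y) * ‖g (Fin.snoc x y)‖ ^ 2 := by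
  set M := ∑ y ∈ link G x, W.m (i + 1) (Fin.snoc x y) * ‖g (Fin.snoc x y)‖ ^ 2
  have hM : 0 ≤ M := Finset.sum_nonneg fun y _ => mul_nonneg (W.nonneg _ _) (sq_nonneg _)
  rcases (W.nonneg i x).eq_or_lt with h0 | hpos
  · simpa [← h0] using mul_nonneg hC hM
  set S := ∑ y ∈ link G x, W.m (i + 1) (Fin.snoc x y) •
    ((φ (i + 1) (Fin.snoc x y) - φ i x) * g (Fin.snoc x y)) with hS_def
  have hS : ‖S‖ ^ 2 ≤ C * W.m i x * M :=
    (norm_sum_smul_sq_le _ (fun _ => W.nonneg _ _) fun y _ => norm_mul_le _ _).trans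
      (mul_le_mul_of_nonneg_right hφ hM)
  calc W.m i x * ‖delta G W i (φ (i + 1) * g) x - φ i x * delta G W i g x‖ ^ 2
      = (W.m i x)⁻¹ * ‖S‖ ^ 2 := by
        rw [delta_mul_sub_mul_delta hi, ← hS_def, norm_smul, norm_inv,
          Real.norm_of_nonneg hpos.le]
        field_simp
    _ ≤ (W.m i x)⁻¹ * (C * W.m i x * M) := by gcongr
    _ = C * M := by field_simp

namespace IsCutoffSequence

variable {φ : ℕ → ∀ i : ℕ, (Fin (i + 1) → V) → ℂ} {i : ℕ}

lemma eventually_eq_one_snoc (hφ : IsCutoffSequence W φ) (x : Fin (i + 1) → V) :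
    ∀ᶠ k in atTop, φ k i x = 1 ∧ ∀ y ∈ link G x, φ k (i + 1) (Fin.snoc x y) = 1 :=
  (hφ.eventually_eq_one i x).and <|
    (eventually_all_finset _).2 fun _ _ => hφ.eventually_eq_one _ _

lemma isL2Null_sub_one_mul (hφ : IsCutoffSequence W φ) {f : (Fin (i + 1) → V) → ℂ}
    (hf : MemL2 W i f) : IsL2Null (W.m i) fun k => (φ k i - 1) * f := by
  refine isL2Null_of_dominated (W.nonneg i) (Summable.mul_left 4 hf) (fun k x => ?_) fun x => ?_
  · have hbound : ‖φ k i x - 1‖ ≤ 2 :=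
      (norm_sub_le _ _).trans (by linarith [hφ.norm_le_one k i x, norm_one (α := ℂ)])
    calc W.m i x * ‖(φ k i x - 1) * f x‖ ^ 2 = W.m i x * (‖φ k i x - 1‖ ^ 2 * ‖f x‖ ^ 2) := by
          rw [norm_mul, mul_pow]
      _ ≤ W.m i x * (2 ^ 2 * ‖f x‖ ^ 2) := by
          gcongr
          exact W.nonneg i x
      _ = 4 * (W.m i x * ‖f x‖ ^ 2) := by ring
  · exact (hφ.eventually_eq_one i x).mono fun k hk => by simp [hk]

lemma isL2Null_delta_comm (hφ : IsCutoffSequence W φ) (hi : i + 1 ≤ n)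
    {g : (Fin (i + 2) → V) → ℂ} (hg : MemL2 W (i + 1) g) :
    IsL2Null (W.m i) fun k => delta G W i (φ k (i + 1) * g) - φ k i * delta G W i g := by
  obtain ⟨C, hC, hE⟩ := hφ.exists_extensionEnergy_le
  refine isL2Null_of_dominated (W.nonneg i) ((hg.summable_sum_link hi).mul_left C)
    (fun k x => m_mul_norm_delta_comm_sq_le hi hC (hE k i hi x) g) fun x => ?_
  filter_upwards [hφ.eventually_eq_one_snoc x] with k ⟨hx, hxy⟩
  refine (delta_mul_sub_mul_delta hi).trans ?_
  rw [Finset.sum_eq_zero fun y hy => ?_, smul_zero]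
  rw [hx, hxy y hy, sub_self, zero_mul, smul_zero]

lemma isL2Null_d_comm_face (hφ : IsCutoffSequence W φ) (hi : i + 1 ≤ n)
    {f : (Fin (i + 1) → V) → ℂ} (hf : MemL2 W i f) (j : Fin (i + 2)) :
    IsL2Null (W.m (i + 1)) fun k z =>
      (-1 : ℂ) ^ (j : ℕ) * (φ k i (z ∘ j.succAbove) - φ k (i + 1) z) * f (z ∘ j.succAbove) := by
  obtain ⟨C, -, hE⟩ := hφ.exists_extensionEnergy_le
  let e : (Fin (i + 1) → V) × V ≃ (Fin (i + 2) → V) :=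
    (Equiv.prodComm _ _).trans (Fin.insertNthEquiv (fun _ => V) j)
  have hface : ∀ x y, e (x, y) ∘ j.succAbove = x := fun x y => Fin.insertNth_comp_succAbove j y x
  have hm : ∀ x y, W.m (i + 1) (e (x, y)) = W.m (i + 1) (Fin.snoc x y) := fun x y => by
    obtain ⟨σ, hσ⟩ := exists_perm_insertNth_eq_snoc_comp j y x
    exact (congrArg _ hσ).trans (W.m_comp_perm hi _ σ)
  have hφe : ∀ k x y, φ k (i + 1) (e (x, y)) = φ k (i + 1) (Fin.snoc x y) := fun k x y => by
    obtain ⟨σ, hσ⟩ := exists_perm_insertNth_eq_snoc_comp j y x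
    exact (congrArg _ hσ).trans (hφ.comp_perm k _ _ σ)
  refine (isL2Null_comp_equiv_iff e).1 <| isL2Null_of_fibre_dominated (s := link G)
    (fun p => W.nonneg _ _) (fun x y hy => ?_) (Summable.mul_left C hf) (fun k x => ?_)
    fun x => ?_
  · exact (hm x y).trans (W.m_snoc_eq_zero hi hy)
  · calc _ = extensionEnergy W (φ k) x * ‖f x‖ ^ 2 := by
          rw [extensionEnergy, Finset.sum_mul]
          refine Finset.sum_congr rfl fun y _ => ?_
          simp only [Function.comp_apply, hface, hm, hφe, norm_mul, norm_pow, norm_neg, norm_one,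
            one_pow, one_mul, mul_pow, mul_assoc, norm_sub_rev (φ k i x)]
      _ ≤ C * W.m i x * ‖f x‖ ^ 2 := mul_le_mul_of_nonneg_right (hE k i hi x) (sq_nonneg _)
      _ = C * (W.m i x * ‖f x‖ ^ 2) := mul_assoc _ _ _
  · filter_upwards [hφ.eventually_eq_one_snoc x] with k ⟨hx, hxy⟩ y hy
    simp only [Function.comp_apply, hface, hφe, hx, hxy y hy, sub_self, mul_zero, zero_mul]

lemma isL2Null_d_comm (hφ : IsCutoffSequence W φ) (hi : i + 1 ≤ n)
    {f : (Fin (i + 1) → V) → ℂ} (hf : MemL2 W i f) :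
    IsL2Null (W.m (i + 1)) fun k => d G i (φ k i * f) - φ k (i + 1) * d G i f := by
  refine (IsL2Null.sum (W.nonneg _) Finset.univ fun j =>
    hφ.isL2Null_d_comm_face hi hf j).congr fun k z hz => ?_
  have hsimplex : IsSimplex G z := not_not.1 fun h => hz (W.m_eq_zero hi h)
  simpa using d_mul_sub_mul_d (φ := φ k) (f := f) hsimplex

variable {u : ∀ i : ℕ, (Fin (i + 1) → V) → ℂ}

lemma isL2Null_delta_comm_family (hφ : IsCutoffSequence W φ) (hu : CochainFamily G n u)
    (hL : MemL2Family W u) (i : ℕ) :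
    IsL2Null (W.m i) fun k =>
      delta G W i (φ k (i + 1) * u (i + 1)) - φ k i * delta G W i (u (i + 1)) := by
  by_cases hi : i + 1 ≤ n
  · exact hφ.isL2Null_delta_comm hi (hL (i + 1))
  · refine (isL2Null_zero (W.m i)).congr fun k x _ => ?_
    simp [hu.2 (i + 1) (not_le.1 hi), delta, deltaOn]

lemma isL2Null_Dop_comm (hφ : IsCutoffSequence W φ) (hu : CochainFamily G n u)
    (hL : MemL2Family W u) (i : ℕ) :
    IsL2Null (W.m i) fun k => Dop G W (φ k * u) i - φ k i * Dop G W u i := by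
  rcases i with _ | i
  · exact hφ.isL2Null_delta_comm_family hu hL 0
  by_cases hi : i + 1 ≤ n
  · refine ((hφ.isL2Null_d_comm hi (hL i)).add (W.nonneg _)
      (hφ.isL2Null_delta_comm_family hu hL (i + 1))).congr fun k x _ => ?_
    simp only [Dop, if_pos hi, Pi.add_apply, Pi.sub_apply, Pi.mul_apply]
    ring
  · refine (isL2Null_zero _).congr fun k x _ => ?_
    simp [Dop, hi]

lemma cochainFamily_mul (hφ : IsCutoffSequence W φ) (hu : CochainFamily G n u) (k : ℕ) :
    CochainFamily G n (φ k * u) := by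
  refine ⟨fun i => ⟨fun x σ => ?_, fun x hx => ?_⟩, fun i hi => ?_⟩
  · simp only [Pi.mul_apply, hφ.comp_perm, (hu.1 i).1 x σ, mul_left_comm]
  · simp [(hu.1 i).2 x hx]
  · simp [hu.2 i hi]

lemma finSuppFamily_mul (hφ : IsCutoffSequence W φ) (hu : CochainFamily G n u) (k : ℕ) :
    FinSuppFamily (φ k * u) := fun i =>
  (hφ.finite_support k i).subset fun x hx =>
    ⟨not_not.1 fun h => right_ne_zero_of_mul hx ((hu.1 i).2 x h), left_ne_zero_of_mul hx⟩

theorem esa_D (hφ : IsCutoffSequence W φ) : ESA_D W := by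
  intro u hu hL hDL
  refine ⟨fun k => φ k * u, fun k => ⟨hφ.cochainFamily_mul hu k, hφ.finSuppFamily_mul hu k⟩,
    fun i => IsL2Null.tendstoL2 ?_, fun i => IsL2Null.tendstoL2 ?_⟩
  · exact (hφ.isL2Null_sub_one_mul (hL i)).congr fun k x _ => by simp [sub_mul]
  · have hcomm := hφ.isL2Null_Dop_comm hu hL i
    exact (hcomm.add (W.nonneg i) (hφ.isL2Null_sub_one_mul (hDL i))).congr fun k x _ => by
      simp [sub_mul]

end IsCutoffSequence

end Cutoff

/-! ### Averages of vertex functions -/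

section Average

variable {G : WG V} {χ : V → ℝ} {k : ℕ}

lemma avg_comp_perm (χ : V → ℝ) (x : Fin k → V) (σ : Equiv.Perm (Fin k)) :
    avg χ (x ∘ σ) = avg χ x :=
  congrArg ((k : ℂ)⁻¹ * ·) (Equiv.sum_comp σ fun j => (χ (x j) : ℂ))

lemma avg_eq_one {x : Fin (k + 1) → V} (h : ∀ j, χ (x j) = 1) : avg χ x = 1 := by
  have hk : (k : ℂ) + 1 ≠ 0 := Nat.cast_add_one_ne_zero k
  simp [avg, h, hk]

lemma avg_comp_succAbove (χ : V → ℝ) (z : Fin (k + 1) → V) (l : Fin (k + 1)) :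
    avg χ (z ∘ l.succAbove) = (k : ℂ)⁻¹ * (∑ a, (χ (z a) : ℂ) - χ (z l)) := by
  simp [avg, Fin.sum_univ_succAbove (fun a => (χ (z a) : ℂ)) l]

lemma avg_snoc_sub_avg (χ : V → ℝ) (x : Fin (k + 1) → V) (y : V) :
    avg χ (Fin.snoc x y : Fin (k + 2) → V) - avg χ x = ((k : ℂ) + 2)⁻¹ * (χ y - avg χ x) := by
  have h1 : (k : ℂ) + 1 ≠ 0 := Nat.cast_add_one_ne_zero k
  have h2 : (k : ℂ) + 2 ≠ 0 := by exact_mod_cast (k + 1).succ_ne_zero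
  simp only [avg, Fin.sum_univ_castSucc (n := k + 1), Fin.snoc_castSucc, Fin.snoc_last]
  push_cast
  rw [show (k : ℂ) + 1 + 1 = k + 2 by ring]
  field_simp
  ring

lemma norm_avg_snoc_sub_avg_le (χ : V → ℝ) (x : Fin (k + 1) → V) (y : V) :
    ‖avg χ (Fin.snoc x y : Fin (k + 2) → V) - avg χ x‖ ≤ ‖(χ y : ℂ) - avg χ x‖ := by
  rw [avg_snoc_sub_avg, norm_mul, norm_inv]
  refine mul_le_of_le_one_left (norm_nonneg _) (inv_le_one_of_one_le₀ ?_)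
  rw [show (k : ℂ) + 2 = ((k + 2 : ℕ) : ℂ) by push_cast; ring, Complex.norm_natCast]
  exact_mod_cast Nat.succ_pos (k + 1)

variable {i : ℕ}

/-- In odd degree the coboundary of the constant `1` is `1`, not `0`. -/
lemma d_avg_eq_one_of_odd (hi : Odd i) {z : Fin (i + 2) → V} (hz : IsSimplex G z)
    (h : ∀ a, χ (z a) = 1) : d G i (avg χ) z = 1 := by
  simp_rw [d_apply hz, avg_eq_one (x := z ∘ Fin.succAbove _) fun _ => h _, mul_one]
  rw [Fin.sum_neg_one_pow, if_neg (by simpa [Nat.even_add] using hi)]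

lemma d_avg_snoc_of_even (χ : V → ℝ) (hi : Even i) {x : Fin (i + 1) → V} {y : V}
    (hxy : IsSimplex G (Fin.snoc x y : Fin (i + 2) → V)) :
    d G i (avg χ) (Fin.snoc x y) =
      ((i : ℂ) + 1)⁻¹ * (χ y - ∑ l : Fin (i + 1), (-1 : ℂ) ^ (l : ℕ) * χ (x l)) := by
  have hsign : ∑ l : Fin (i + 2), (-1 : ℂ) ^ (l : ℕ) = 0 := by
    rw [Fin.sum_neg_one_pow, if_pos (by simpa [Nat.even_add] using hi)]
  set z : Fin (i + 2) → V := Fin.snoc x y with hz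
  have halt : ∑ l : Fin (i + 2), (-1 : ℂ) ^ (l : ℕ) * χ (z l) =
      ∑ l : Fin (i + 1), (-1 : ℂ) ^ (l : ℕ) * χ (x l) - χ y := by
    rw [Fin.sum_univ_castSucc]
    simp [hz, pow_succ, hi.neg_one_pow, sub_eq_add_neg]
  calc d G i (avg χ) z
      = ((i : ℂ) + 1)⁻¹ * ((∑ l : Fin (i + 2), (-1 : ℂ) ^ (l : ℕ)) * ∑ a, (χ (z a) : ℂ)
          - ∑ l : Fin (i + 2), (-1 : ℂ) ^ (l : ℕ) * χ (z l)) := by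
        rw [d_apply hxy, Finset.sum_mul, ← Finset.sum_sub_distrib, Finset.mul_sum]
        refine Finset.sum_congr rfl fun l _ => ?_
        rw [avg_comp_succAbove]
        push_cast
        ring
    _ = _ := by
        rw [hsign, halt]
        ring

lemma sum_d_avg_rotate (χ : V → ℝ) (hi : Even i) {x : Fin (i + 1) → V} {y : V}
    (hxy : y ∈ link G x) :
    ∑ s : Fin (i + 1), d G i (avg χ) (Fin.snoc (x ∘ Equiv.addRight s) y) = χ y - avg χ x := by
  have hsimplex : ∀ s : Fin (i + 1),
      IsSimplex G (Fin.snoc (x ∘ Equiv.addRight s) y : Fin (i + 2) → V) := fun s => by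
    rwa [← mem_link, link_comp_perm]
  have hi0 : (i : ℂ) + 1 ≠ 0 := Nat.cast_add_one_ne_zero i
  simp_rw [fun s => d_avg_snoc_of_even χ hi (hsimplex s), ← Finset.mul_sum,
    Finset.sum_sub_distrib, Function.comp_apply, Equiv.coe_addRight,
    sum_sum_neg_one_pow_mul_rotate hi fun l => (χ (x l) : ℂ)]
  simp only [avg, Finset.sum_const, Finset.card_univ, Fintype.card_fin, nsmul_eq_mul]
  push_cast
  field_simp

end Average

/-! ### Cut-offs from global `χ`-completeness -/

section ChiComplete

variable {G : WG V} {n : ℕ} {W : CliqueWeights G n} {χ : V → ℝ} {C : ℝ} {i : ℕ}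
  {x : Fin (i + 1) → V}

lemma sum_m_mul_norm_d_avg_sq_le (hi : i + 1 ≤ n) (hx : IsSimplex G x)
    (h : gradEnergyOn W Set.univ i χ x ≤ C) :
    ∑ y ∈ link G x, W.m (i + 1) (Fin.snoc x y) * ‖d G i (avg χ) (Fin.snoc x y)‖ ^ 2 ≤
      C * W.m i x := by
  have hm : 0 < W.m i x := (W.m_pos_iff (Nat.le_of_succ_le hi)).2 hx
  rw [gradEnergyOn, Set.indicator_univ] at h
  rw [← inv_mul_le_iff₀' hm]
  exact (congrArg _ (W.tsum_m_snoc_mul hi x fun y =>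
    ‖d G i (avg χ) (Fin.snoc x y)‖ ^ 2)).ge.trans h

lemma sum_m_mul_norm_sub_avg_sq_le_of_even (hi : i + 1 ≤ n) (heven : Even i)
    (hx : IsSimplex G x)
    (h : ∀ σ : Equiv.Perm (Fin (i + 1)), gradEnergyOn W Set.univ i χ (x ∘ σ) ≤ C) :
    ∑ y ∈ link G x, W.m (i + 1) (Fin.snoc x y) * ‖(χ y : ℂ) - avg χ x‖ ^ 2 ≤
      ((i : ℝ) + 1) ^ 2 * C * W.m i x := by
  let q : Fin (i + 1) → V → ℂ := fun s y => d G i (avg χ) (Fin.snoc (x ∘ Equiv.addRight s) y)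
  have hq : ∀ s, ∑ y ∈ link G x, W.m (i + 1) (Fin.snoc x y) * ‖q s y‖ ^ 2 ≤ C * W.m i x :=
    fun s => by
      have hs := sum_m_mul_norm_d_avg_sq_le hi (hx.comp_perm (Equiv.addRight s)) (h _)
      simpa only [link_comp_perm, W.m_snoc_comp_perm hi,
        W.m_comp_perm (Nat.le_of_succ_le hi)] using hs
  calc ∑ y ∈ link G x, W.m (i + 1) (Fin.snoc x y) * ‖(χ y : ℂ) - avg χ x‖ ^ 2
      ≤ ∑ y ∈ link G x, W.m (i + 1) (Fin.snoc x y) * (((i : ℝ) + 1) * ∑ s, ‖q s y‖ ^ 2) := by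
        refine Finset.sum_le_sum fun y hy => mul_le_mul_of_nonneg_left ?_ (W.nonneg _ _)
        rw [← sum_d_avg_rotate χ heven hy]
        refine (norm_sum_sq_le_card_mul Finset.univ fun s => q s y).trans_eq ?_
        simp
    _ = ((i : ℝ) + 1) * ∑ s, ∑ y ∈ link G x, W.m (i + 1) (Fin.snoc x y) * ‖q s y‖ ^ 2 := by
        rw [Finset.sum_comm, Finset.mul_sum]
        refine Finset.sum_congr rfl fun y _ => ?_
        rw [← Finset.mul_sum, mul_left_comm]
    _ ≤ ((i : ℝ) + 1) * ∑ _s : Fin (i + 1), C * W.m i x := by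
        gcongr with s
        exact hq s
    _ = ((i : ℝ) + 1) ^ 2 * C * W.m i x := by
        rw [Finset.sum_const, Finset.card_univ, Fintype.card_fin, nsmul_eq_mul]
        push_cast
        ring

lemma sum_m_snoc_le_of_odd (hi : i + 1 ≤ n) (hodd : Odd i) (hx : IsSimplex G x)
    (hχx : ∀ j, χ (x j) = 1) (hχ : ∀ y ∈ link G x, χ y = 1)
    (h : gradEnergyOn W Set.univ i χ x ≤ C) :
    ∑ y ∈ link G x, W.m (i + 1) (Fin.snoc x y) ≤ C * W.m i x := by
  refine (Finset.sum_congr rfl fun y hy => ?_).trans_le (sum_m_mul_norm_d_avg_sq_le hi hx h)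
  have hone : ∀ a, χ ((Fin.snoc x y : Fin (i + 2) → V) a) = 1 :=
    Fin.lastCases (by simpa using hχ y hy) fun a => by simpa using hχx a
  rw [d_avg_eq_one_of_odd hodd (mem_link.1 hy) hone]
  simp

/-- The average `χ̃` truncated to `[0, 1]`. Global `χ`-completeness does not bound the functions
`χ_k`, so the truncation is what makes the cut-offs uniformly bounded. -/
noncomputable def cutoff (χ : V → ℝ) (i : ℕ) (x : Fin (i + 1) → V) : ℂ :=
  (Set.projIcc (0 : ℝ) 1 zero_le_one (avg χ x).re : ℝ)

lemma norm_cutoff_le_one (χ : V → ℝ) (x : Fin (i + 1) → V) : ‖cutoff χ i x‖ ≤ 1 := by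
  rw [cutoff, Complex.norm_real, Real.norm_of_nonneg (Set.projIcc _ _ _ _).2.1]
  exact (Set.projIcc _ _ _ _).2.2

lemma cutoff_eq_one (h : ∀ j, χ (x j) = 1) : cutoff χ i x = 1 := by
  simp [cutoff, avg_eq_one h]

lemma norm_cutoff_sub_cutoff_le_one (χ : V → ℝ) {j : ℕ} (x : Fin (i + 1) → V)
    (z : Fin (j + 1) → V) : ‖cutoff χ i x - cutoff χ j z‖ ≤ 1 := by
  rw [cutoff, cutoff, ← Complex.ofReal_sub, Complex.norm_real, Real.norm_eq_abs]
  exact Real.dist_le_of_mem_Icc_01 (Subtype.prop _) (Subtype.prop _)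

lemma norm_cutoff_sub_cutoff_le (χ : V → ℝ) {j : ℕ} (x : Fin (i + 1) → V)
    (z : Fin (j + 1) → V) : ‖cutoff χ i x - cutoff χ j z‖ ≤ ‖avg χ x - avg χ z‖ := by
  rw [cutoff, cutoff, ← Complex.ofReal_sub, Complex.norm_real, Real.norm_eq_abs]
  exact (Set.abs_projIcc_sub_projIcc _).trans (Complex.abs_re_le_norm (avg χ x - avg χ z))

lemma finite_setOf_isSimplex_cutoff_ne_zero (hχ : (Function.support χ).Finite) (i : ℕ) :
    {x : Fin (i + 1) → V | IsSimplex G x ∧ cutoff χ i x ≠ 0}.Finite := by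
  have hnbhd : (⋃ v ∈ Function.support χ, insert v {y | G.Adj v y}).Finite :=
    hχ.biUnion fun v _ => (G.locFin v).insert v
  refine (Set.Finite.pi' fun _ : Fin (i + 1) => hnbhd).subset fun x ⟨hsimplex, hcut⟩ a => ?_
  obtain ⟨j, hj⟩ : ∃ j, χ (x j) ≠ 0 := by
    by_contra! h
    exact hcut (by simp [cutoff, avg, h])
  refine Set.mem_biUnion (x := x j) hj ?_
  rcases eq_or_ne j a with rfl | hja
  · exact Set.mem_insert _ _
  · exact Set.mem_insert_of_mem _ (hsimplex.2 j a hja)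

lemma extensionEnergy_cutoff_le_of_even (hi : i + 1 ≤ n) (heven : Even i) (hx : IsSimplex G x)
    (h : ∀ σ : Equiv.Perm (Fin (i + 1)), gradEnergyOn W Set.univ i χ (x ∘ σ) ≤ C) :
    extensionEnergy W (cutoff χ) x ≤ ((i : ℝ) + 1) ^ 2 * C * W.m i x := by
  refine (Finset.sum_le_sum fun y _ => ?_).trans
    (sum_m_mul_norm_sub_avg_sq_le_of_even hi heven hx h)
  have hle := (norm_cutoff_sub_cutoff_le χ _ x).trans (norm_avg_snoc_sub_avg_le χ x y)
  exact mul_le_mul_of_nonneg_left (pow_le_pow_left₀ (norm_nonneg _) hle 2) (W.nonneg _ _)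

lemma extensionEnergy_cutoff_le_sum_m (W : CliqueWeights G n) (χ : V → ℝ)
    (x : Fin (i + 1) → V) :
    extensionEnergy W (cutoff χ) x ≤ ∑ y ∈ link G x, W.m (i + 1) (Fin.snoc x y) :=
  Finset.sum_le_sum fun _ _ => mul_le_of_le_one_right (W.nonneg _ _)
    (pow_le_one₀ (norm_nonneg _) (norm_cutoff_sub_cutoff_le_one χ _ x))

namespace IsChiWitnessOn

variable {O : ℕ → Set V} {χ : ℕ → V → ℝ}

lemma eventually_eq_one (hw : IsChiWitnessOn W Set.univ O χ) (v : V) :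
    ∀ᶠ k in atTop, χ k v = 1 := by
  obtain ⟨-, hmono, -, hexhaust, -, hone, -⟩ := hw
  obtain ⟨k₀, hk₀⟩ := Set.mem_iUnion.1 (hexhaust ▸ Set.mem_univ v : v ∈ ⋃ k, O k)
  filter_upwards [eventually_ge_atTop k₀] with k hk
  simpa [avg] using hone k 0 n.zero_le (fun _ => v) (isSimplex_fin_one _)
    (fun _ => Set.mem_univ _) fun _ => hmono hk hk₀

lemma exists_sum_m_snoc_le_of_odd (hw : IsChiWitnessOn W Set.univ O χ) :
    ∃ C, 0 ≤ C ∧ ∀ i, i + 1 ≤ n → Odd i → ∀ x : Fin (i + 1) → V, IsSimplex G x →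
      ∑ y ∈ link G x, W.m (i + 1) (Fin.snoc x y) ≤ C * W.m i x := by
  obtain ⟨-, -, -, -, -, -, C, hC, hE⟩ := id hw
  refine ⟨C, hC.le, fun i hi hodd x hx => ?_⟩
  obtain ⟨k, hkx, hk⟩ := ((eventually_all.2 fun j => hw.eventually_eq_one (x j)).and
    ((eventually_all_finset (link G x)).2 fun y _ => hw.eventually_eq_one y)).exists
  exact sum_m_snoc_le_of_odd hi hodd hx hkx hk (hE k i hi x hx fun _ => Set.mem_univ _)

lemma exists_extensionEnergy_cutoff_le (hw : IsChiWitnessOn W Set.univ O χ) :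
    ∃ C, 0 ≤ C ∧ ∀ k i, i + 1 ≤ n → ∀ x : Fin (i + 1) → V,
      extensionEnergy W (cutoff (χ k)) x ≤ C * W.m i x := by
  obtain ⟨C', hC', hdeg⟩ := hw.exists_sum_m_snoc_le_of_odd
  obtain ⟨-, -, -, -, -, -, C, hC, hE⟩ := hw
  refine ⟨(n : ℝ) ^ 2 * C + C', by positivity, fun k i hi x => ?_⟩
  have hm := W.nonneg i x
  have hin : (i : ℝ) + 1 ≤ n := by exact_mod_cast hi
  by_cases hx : IsSimplex G x
  swap
  · rw [extensionEnergy, link_eq_empty hx, Finset.sum_empty]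
    positivity
  rcases i.even_or_odd with heven | hodd
  · calc extensionEnergy W (cutoff (χ k)) x ≤ ((i : ℝ) + 1) ^ 2 * C * W.m i x :=
          extensionEnergy_cutoff_le_of_even hi heven hx fun σ =>
            hE k i hi _ (hx.comp_perm σ) fun _ => Set.mem_univ _
      _ ≤ (n : ℝ) ^ 2 * C * W.m i x := by gcongr
      _ ≤ ((n : ℝ) ^ 2 * C + C') * W.m i x := by
          gcongr
          exact le_add_of_nonneg_right hC'
  · calc extensionEnergy W (cutoff (χ k)) x ≤ C' * W.m i x :=
          (extensionEnergy_cutoff_le_sum_m W (χ k) x).trans (hdeg i hi hodd x hx)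
      _ ≤ ((n : ℝ) ^ 2 * C + C') * W.m i x := by
          gcongr
          exact le_add_of_nonneg_left (by positivity)

theorem isCutoffSequence_cutoff (hw : IsChiWitnessOn W Set.univ O χ) :
    IsCutoffSequence W fun k => cutoff (χ k) where
  comp_perm k i x σ := by rw [cutoff, avg_comp_perm, cutoff]
  norm_le_one k i x := norm_cutoff_le_one (χ k) x
  finite_support k i := by
    obtain ⟨-, -, -, -, hsupp, -⟩ := hw
    exact finite_setOf_isSimplex_cutoff_ne_zero (hsupp k) i
  eventually_eq_one i x :=
    (eventually_all.2 fun j => hw.eventually_eq_one (x j)).mono fun k hk => cutoff_eq_one hk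
  exists_extensionEnergy_le := hw.exists_extensionEnergy_cutoff_le

end IsChiWitnessOn

theorem gaussBonnet_esa_of_globallyChiComplete_general (W : CliqueWeights G n)
    (hχ : GloballyChiComplete W) : ESA_D W := by
  obtain ⟨O, χ, hw⟩ := hχ
  exact hw.isCutoffSequence_cutoff.esa_D

end ChiComplete

/-- If the weighted oriented clique `n`-simplicial complex is globally
`χ`-complete, then the Gauss–Bonnet operator `D = d + δ`, defined on `⊕_{i=0}^n C_c^i(V)`
in `H = ⊕_{i=0}^n ℓ²(m_i)`, is essentially self-adjoint (its minimal and maximal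
extensions coincide). -/
theorem gaussBonnet_esa_of_globallyChiComplete
    {V : Type*} [Countable V] (G : WG V) {n : ℕ} (hn : 2 ≤ n) (W : CliqueWeights G n)
    (hχ : GloballyChiComplete W) :
    ESA_D W :=
  gaussBonnet_esa_of_globallyChiComplete_general W hχ

end DiscreteHodge
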